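/- Let c, d : [0, π] × [0, 2π] → ℝ be smooth functions satisfying Condition A and Condition B, and set l := ∂_θ c + 2c cot θ + (∂_ψ d) csc θ and l̄ := ∂_θ d + 2d cot θ − (∂_ψ c) csc θ on (0, π) × [0, 2π]. Then for each ν ∈ {0, 1, 2, 3}, with the integral understood as an iterated integral (integrating in ψ first), ∫₀^π ∫₀^{2π} (∂_θ l + l cot θ + (∂_ψ l̄) csc θ) · n^ν · sin θ dψ dθ = 0, where n⁰ = 1, n¹ = sin θ cos ψ, n² = sin θ sin ψ, n³ = cos θ. -/

import Mathlib

/-!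
Multiplying by `sin θ` turns the divergence term into `∂_θ (l sin θ) + ∂_ψ l̄`, that is, into
`c_θθ sin θ + 3 c_θ cos θ - 2 c sin θ + 2 d_θψ + 2 d_ψ cot θ - c_ψψ csc θ`
(`divergence_term_eq`; this uses the symmetry of the second derivatives of `d`). For each `ν` the
product of this with `n^ν` is again a divergence `∂_θ G + ∂_ψ H`, where

* `ν = 0`: `G = c_θ sin θ + 2 c cos θ` and `H = d_θ + l̄`;
* `ν = 3`: `G = (c_θ sin θ + 2 c cos θ) cos θ + c sin² θ` and `H = (d_θ + l̄) cos θ`;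
* `ν = 1, 2`: `G = (c_θ sin² θ + c sin θ cos θ + 2 d_ψ sin θ) w` and `H = c w' - c_ψ w`, with
  `w = cos ψ` or `w = sin ψ`, so that `w'' = -w`.

`H` is regular for `0 < θ < π` and periodic in `ψ` by Condition A, so `∂_ψ H` integrates to zero
over `ψ`. `G` is smooth up to the poles, so after exchanging the order of integration `∂_θ G`
contributes `∫ (G(π, ψ) - G(0, ψ)) dψ`. This vanishes by Condition B for `ν = 0, 3`, and because
of the factor `sin θ` for `ν = 1, 2` (`integral_divergence_eq_zero`).
-/

open Real MeasureTheory

/-- Partial derivative in the first (θ) variable. -/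
noncomputable def pd₁ (f : ℝ → ℝ → ℝ) (θ ψ : ℝ) : ℝ := deriv (fun t => f t ψ) θ

/-- Partial derivative in the second (ψ) variable. -/
noncomputable def pd₂ (f : ℝ → ℝ → ℝ) (θ ψ : ℝ) : ℝ := deriv (fun t => f θ t) ψ

/-- Condition A: `f` together with its derivatives up to second order takes equal
values at `ψ = 0` and `ψ = 2π`. -/
def CondA (f : ℝ → ℝ → ℝ) : Prop :=
  ∀ θ : ℝ, f θ 0 = f θ (2 * π) ∧
    pd₁ f θ 0 = pd₁ f θ (2 * π) ∧ pd₂ f θ 0 = pd₂ f θ (2 * π) ∧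
    pd₁ (pd₁ f) θ 0 = pd₁ (pd₁ f) θ (2 * π) ∧
    pd₂ (pd₁ f) θ 0 = pd₂ (pd₁ f) θ (2 * π) ∧
    pd₂ (pd₂ f) θ 0 = pd₂ (pd₂ f) θ (2 * π)

/-- `l = c_{,2} + 2c cot θ + d_{,3} csc θ`. -/
noncomputable def lfun (c d : ℝ → ℝ → ℝ) (θ ψ : ℝ) : ℝ :=
  pd₁ c θ ψ + 2 * c θ ψ * (cos θ / sin θ) + pd₂ d θ ψ * (sin θ)⁻¹

/-- `l̄ = d_{,2} + 2d cot θ - c_{,3} csc θ`. -/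
noncomputable def lbar (c d : ℝ → ℝ → ℝ) (θ ψ : ℝ) : ℝ :=
  pd₁ d θ ψ + 2 * d θ ψ * (cos θ / sin θ) - pd₂ c θ ψ * (sin θ)⁻¹

/-- The four unit-sphere functions `n⁰ = 1`, `n¹ = sin θ cos ψ`,
`n² = sin θ sin ψ`, `n³ = cos θ`. -/
noncomputable def nvec (ν : Fin 4) (θ ψ : ℝ) : ℝ :=
  ![1, sin θ * cos ψ, sin θ * sin ψ, cos θ] ν


section Partials

variable {f : ℝ → ℝ → ℝ}

lemma hasDerivAt_slice_fst (hf : ContDiff ℝ (⊤ : ℕ∞) (fun p : ℝ × ℝ => f p.1 p.2)) (θ ψ : ℝ) :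
    HasDerivAt (fun t => f t ψ) (fderiv ℝ (fun p : ℝ × ℝ => f p.1 p.2) (θ, ψ) (1, 0)) θ := by
  have h1 := (hf.differentiable (by simp) (θ, ψ)).hasFDerivAt
  exact h1.comp_hasDerivAt θ ((hasDerivAt_id θ).prodMk (hasDerivAt_const θ ψ))

lemma hasDerivAt_slice_snd (hf : ContDiff ℝ (⊤ : ℕ∞) (fun p : ℝ × ℝ => f p.1 p.2)) (θ ψ : ℝ) :
    HasDerivAt (fun t => f θ t) (fderiv ℝ (fun p : ℝ × ℝ => f p.1 p.2) (θ, ψ) (0, 1)) ψ := by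
  have h1 := (hf.differentiable (by simp) (θ, ψ)).hasFDerivAt
  exact h1.comp_hasDerivAt ψ ((hasDerivAt_const ψ θ).prodMk (hasDerivAt_id ψ))

lemma pd₁_eq_fderiv (hf : ContDiff ℝ (⊤ : ℕ∞) (fun p : ℝ × ℝ => f p.1 p.2)) (θ ψ : ℝ) :
    pd₁ f θ ψ = fderiv ℝ (fun p : ℝ × ℝ => f p.1 p.2) (θ, ψ) (1, 0) :=
  (hasDerivAt_slice_fst hf θ ψ).deriv

lemma pd₂_eq_fderiv (hf : ContDiff ℝ (⊤ : ℕ∞) (fun p : ℝ × ℝ => f p.1 p.2)) (θ ψ : ℝ) :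
    pd₂ f θ ψ = fderiv ℝ (fun p : ℝ × ℝ => f p.1 p.2) (θ, ψ) (0, 1) :=
  (hasDerivAt_slice_snd hf θ ψ).deriv

lemma hasDerivAt_pd₁ (hf : ContDiff ℝ (⊤ : ℕ∞) (fun p : ℝ × ℝ => f p.1 p.2)) (θ ψ : ℝ) :
    HasDerivAt (fun t => f t ψ) (pd₁ f θ ψ) θ :=
  (hasDerivAt_slice_fst hf θ ψ).differentiableAt.hasDerivAt

lemma hasDerivAt_pd₂ (hf : ContDiff ℝ (⊤ : ℕ∞) (fun p : ℝ × ℝ => f p.1 p.2)) (θ ψ : ℝ) :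
    HasDerivAt (fun t => f θ t) (pd₂ f θ ψ) ψ :=
  (hasDerivAt_slice_snd hf θ ψ).differentiableAt.hasDerivAt

lemma contDiff_pd₁ (hf : ContDiff ℝ (⊤ : ℕ∞) (fun p : ℝ × ℝ => f p.1 p.2)) :
    ContDiff ℝ (⊤ : ℕ∞) (fun p : ℝ × ℝ => pd₁ f p.1 p.2) := by
  simp only [pd₁_eq_fderiv hf]
  exact (hf.fderiv_right (m := (⊤ : ℕ∞)) (by simp)).clm_apply contDiff_const

lemma contDiff_pd₂ (hf : ContDiff ℝ (⊤ : ℕ∞) (fun p : ℝ × ℝ => f p.1 p.2)) :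
    ContDiff ℝ (⊤ : ℕ∞) (fun p : ℝ × ℝ => pd₂ f p.1 p.2) := by
  simp only [pd₂_eq_fderiv hf]
  exact (hf.fderiv_right (m := (⊤ : ℕ∞)) (by simp)).clm_apply contDiff_const

/-- Schwarz's theorem for the two partial derivatives. -/
lemma pd₁_pd₂_comm (hf : ContDiff ℝ (⊤ : ℕ∞) (fun p : ℝ × ℝ => f p.1 p.2)) (θ ψ : ℝ) :
    pd₁ (pd₂ f) θ ψ = pd₂ (pd₁ f) θ ψ := by
  have hD : Differentiable ℝ (fderiv ℝ (fun p : ℝ × ℝ => f p.1 p.2)) :=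
    (hf.fderiv_right (m := (⊤ : ℕ∞)) (by simp)).differentiable (by simp)
  have hsymm : IsSymmSndFDerivAt ℝ (fun p : ℝ × ℝ => f p.1 p.2) (θ, ψ) :=
    hf.contDiffAt.isSymmSndFDerivAt (by simpa using WithTop.coe_le_coe.2 (le_top : (2 : ℕ∞) ≤ ⊤))
  rw [pd₁_eq_fderiv (contDiff_pd₂ hf), pd₂_eq_fderiv (contDiff_pd₁ hf)]
  simp only [pd₁_eq_fderiv hf, pd₂_eq_fderiv hf]
  rw [fderiv_clm_apply (hD _) (differentiableAt_const _),
    fderiv_clm_apply (hD _) (differentiableAt_const _)]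
  simpa using hsymm (1, 0) (0, 1)

end Partials

/-- On `(0, π) × [0, 2π]` let `f = ∂_θ G + ∂_ψ H` with `∂_θ G` continuous up to the boundary. If `H`
is periodic in `ψ` and the boundary contribution of `G` vanishes, then `f` has iterated integral
zero; no regularity of `H` at `θ = 0, π` is needed. -/
lemma integral_divergence_eq_zero (f G g H h : ℝ → ℝ → ℝ)
    (hg : Continuous (fun p : ℝ × ℝ => g p.1 p.2))
    (hG : ∀ θ ψ, HasDerivAt (fun t => G t ψ) (g θ ψ) θ)
    (hh : ∀ θ, Continuous (h θ))
    (hH : ∀ θ, 0 < sin θ → ∀ ψ, HasDerivAt (H θ) (h θ ψ) ψ)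
    (hper : ∀ θ, H θ (2 * π) = H θ 0)
    (hbd : (∫ ψ in (0:ℝ)..(2 * π), (G π ψ - G 0 ψ)) = 0)
    (hf : ∀ θ, 0 < sin θ → ∀ ψ, f θ ψ = g θ ψ + h θ ψ) :
    (∫ θ in (0:ℝ)..π, ∫ ψ in (0:ℝ)..(2 * π), f θ ψ) = 0 := by
  have hinner : ∀ θ, 0 < sin θ →
      (∫ ψ in (0:ℝ)..(2 * π), f θ ψ) = ∫ ψ in (0:ℝ)..(2 * π), g θ ψ := by
    intro θ hθ
    have hgθ : Continuous (g θ) := hg.comp (Continuous.prodMk_right θ)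
    rw [intervalIntegral.integral_congr (fun ψ _ => hf θ hθ ψ),
      intervalIntegral.integral_add (hgθ.intervalIntegrable _ _) ((hh θ).intervalIntegrable _ _),
      intervalIntegral.integral_eq_sub_of_hasDerivAt (fun ψ _ => hH θ hθ ψ)
        ((hh θ).intervalIntegrable _ _), hper, sub_self, add_zero]
  have houter : (∫ θ in (0:ℝ)..π, ∫ ψ in (0:ℝ)..(2 * π), f θ ψ)
      = ∫ θ in (0:ℝ)..π, ∫ ψ in (0:ℝ)..(2 * π), g θ ψ := by
    -- The identity may fail at `θ = π`, where `sin θ = 0`, but this is a null set.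
    rw [intervalIntegral.integral_of_le pi_pos.le, intervalIntegral.integral_of_le pi_pos.le,
      integral_Ioc_eq_integral_Ioo, integral_Ioc_eq_integral_Ioo]
    exact setIntegral_congr_fun measurableSet_Ioo
      (fun θ hθ => hinner θ (sin_pos_of_mem_Ioo hθ))
  have hint : IntegrableOn (Function.uncurry g) (Set.uIoc 0 π ×ˢ Set.uIoc 0 (2 * π)) :=
    (hg.continuousOn.integrableOn_compact (isCompact_uIcc.prod isCompact_uIcc)).mono_set
      (Set.prod_mono Set.uIoc_subset_uIcc Set.uIoc_subset_uIcc)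
  rw [houter, intervalIntegral_intervalIntegral_swap hint]
  refine Eq.trans (intervalIntegral.integral_congr (fun ψ _ => ?_)) hbd
  have hgψ : Continuous (fun θ => g θ ψ) := hg.comp (Continuous.prodMk_left ψ)
  exact intervalIntegral.integral_eq_sub_of_hasDerivAt (f := fun θ => G θ ψ) (fun θ _ => hG θ ψ)
    (hgψ.intervalIntegrable _ _)

/-- The divergence term in expanded form, away from the poles. -/
lemma divergence_term_eq (c d : ℝ → ℝ → ℝ)
    (hc : ContDiff ℝ (⊤ : ℕ∞) (fun p : ℝ × ℝ => c p.1 p.2))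
    (hd : ContDiff ℝ (⊤ : ℕ∞) (fun p : ℝ × ℝ => d p.1 p.2))
    (θ ψ : ℝ) (hs : 0 < sin θ) :
    (pd₁ (lfun c d) θ ψ + lfun c d θ ψ * (cos θ / sin θ)
          + pd₂ (lbar c d) θ ψ * (sin θ)⁻¹) * sin θ
      = pd₁ (pd₁ c) θ ψ * sin θ + 3 * pd₁ c θ ψ * cos θ - 2 * c θ ψ * sin θ
        + 2 * pd₂ (pd₁ d) θ ψ + 2 * pd₂ d θ ψ * (cos θ / sin θ)
        - pd₂ (pd₂ c) θ ψ * (sin θ)⁻¹ := by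
  have hs' : sin θ ≠ 0 := hs.ne'
  have h1 : pd₁ (lfun c d) θ ψ = _ :=
    (((hasDerivAt_pd₁ (contDiff_pd₁ hc) θ ψ).add
      (((hasDerivAt_pd₁ hc θ ψ).const_mul 2).mul
        ((hasDerivAt_cos θ).div (hasDerivAt_sin θ) hs'))).add
      ((hasDerivAt_pd₁ (contDiff_pd₂ hd) θ ψ).mul ((hasDerivAt_sin θ).inv hs'))).deriv
  have h2 : pd₂ (lbar c d) θ ψ = _ :=
    (((hasDerivAt_pd₂ (contDiff_pd₁ hd) θ ψ).add
      (((hasDerivAt_pd₂ hd θ ψ).const_mul 2).mul_const (cos θ / sin θ))).sub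
      ((hasDerivAt_pd₂ (contDiff_pd₂ hc) θ ψ).mul_const (sin θ)⁻¹)).deriv
  rw [h1, h2, pd₁_pd₂_comm hd, lfun]
  simp only [Pi.inv_apply, Pi.div_apply]
  field_simp
  ring

/-- The cases `n¹` and `n²`: the weight is `sin θ · w(ψ)` with `w'' = -w` and `w` periodic. -/
lemma integral_dipole_eq_zero (c d : ℝ → ℝ → ℝ)
    (hc : ContDiff ℝ (⊤ : ℕ∞) (fun p : ℝ × ℝ => c p.1 p.2))
    (hd : ContDiff ℝ (⊤ : ℕ∞) (fun p : ℝ × ℝ => d p.1 p.2))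
    (hAc : CondA c) (w w' : ℝ → ℝ)
    (hw : ∀ ψ, HasDerivAt w (w' ψ) ψ) (hw' : ∀ ψ, HasDerivAt w' (-w ψ) ψ)
    (hwp : w (2 * π) = w 0) (hwp' : w' (2 * π) = w' 0) :
    (∫ θ in (0:ℝ)..π, ∫ ψ in (0:ℝ)..(2 * π),
        (pd₁ (lfun c d) θ ψ + lfun c d θ ψ * (cos θ / sin θ)
          + pd₂ (lbar c d) θ ψ * (sin θ)⁻¹) * (sin θ * w ψ) * sin θ) = 0 := by
  have hwc : Continuous w := continuous_iff_continuousAt.2 fun ψ => (hw ψ).continuousAt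
  have c0 := hc.continuous
  have c1 := (contDiff_pd₁ hc).continuous
  have c11 := (contDiff_pd₁ (contDiff_pd₁ hc)).continuous
  have c22 := (contDiff_pd₂ (contDiff_pd₂ hc)).continuous
  have d2 := (contDiff_pd₂ hd).continuous
  have d12 := (contDiff_pd₂ (contDiff_pd₁ hd)).continuous
  refine integral_divergence_eq_zero _
    (fun θ ψ => (pd₁ c θ ψ * sin θ ^ 2 + c θ ψ * (sin θ * cos θ) + 2 * pd₂ d θ ψ * sin θ) * w ψ)
    (fun θ ψ => (pd₁ (pd₁ c) θ ψ * sin θ ^ 2 + 3 * pd₁ c θ ψ * (sin θ * cos θ)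
      + c θ ψ * (1 - 2 * sin θ ^ 2)
      + 2 * pd₂ (pd₁ d) θ ψ * sin θ + 2 * pd₂ d θ ψ * cos θ) * w ψ)
    (fun θ ψ => c θ ψ * w' ψ - pd₂ c θ ψ * w ψ)
    (fun θ ψ => -(c θ ψ * w ψ) - pd₂ (pd₂ c) θ ψ * w ψ)
    ?_ ?_ ?_ ?_ ?_ ?_ ?_
  · fun_prop
  · intro θ ψ
    have h := ((((hasDerivAt_pd₁ (contDiff_pd₁ hc) θ ψ).mul ((hasDerivAt_sin θ).pow 2)).add
      ((hasDerivAt_pd₁ hc θ ψ).mul ((hasDerivAt_sin θ).mul (hasDerivAt_cos θ)))).add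
      (((hasDerivAt_pd₁ (contDiff_pd₂ hd) θ ψ).const_mul 2).mul (hasDerivAt_sin θ))).mul_const (w ψ)
    refine h.congr_deriv ?_
    rw [pd₁_pd₂_comm hd]
    have hcos : cos θ ^ 2 = 1 - sin θ ^ 2 := cos_sq' θ
    simp only [Pi.pow_apply, Pi.mul_apply]
    push_cast
    linear_combination (c θ ψ * w ψ) * hcos
  · intro θ
    have e1 : Continuous (c θ) := c0.comp (Continuous.prodMk_right θ)
    have e2 : Continuous (pd₂ (pd₂ c) θ) := c22.comp (Continuous.prodMk_right θ)
    fun_prop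
  · intro θ _ ψ
    refine (((hasDerivAt_pd₂ hc θ ψ).mul (hw' ψ)).sub
      ((hasDerivAt_pd₂ (contDiff_pd₂ hc) θ ψ).mul (hw ψ))).congr_deriv ?_
    ring
  · intro θ
    obtain ⟨a0, -, a2, -⟩ := hAc θ
    simp only [← a0, ← a2, hwp, hwp']
  · simp
  · intro θ hs ψ
    have e := divergence_term_eq c d hc hd θ ψ hs
    have hs' := hs.ne'
    rw [show ∀ x : ℝ, x * (sin θ * w ψ) * sin θ = x * sin θ * (sin θ * w ψ) by intro x; ring, e]
    field_simp
    ring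

/-- The cases `n⁰` and `n³`: the weight is `a + b cos θ`. -/
lemma integral_axial_eq_zero (c d : ℝ → ℝ → ℝ)
    (hc : ContDiff ℝ (⊤ : ℕ∞) (fun p : ℝ × ℝ => c p.1 p.2))
    (hd : ContDiff ℝ (⊤ : ℕ∞) (fun p : ℝ × ℝ => d p.1 p.2))
    (hAc : CondA c) (hAd : CondA d)
    (hB0 : (∫ ψ in (0:ℝ)..(2 * π), c 0 ψ) = 0)
    (hBπ : (∫ ψ in (0:ℝ)..(2 * π), c π ψ) = 0) (a b : ℝ) :
    (∫ θ in (0:ℝ)..π, ∫ ψ in (0:ℝ)..(2 * π),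
        (pd₁ (lfun c d) θ ψ + lfun c d θ ψ * (cos θ / sin θ)
          + pd₂ (lbar c d) θ ψ * (sin θ)⁻¹) * (a + b * cos θ) * sin θ) = 0 := by
  have c0 := hc.continuous
  have c1 := (contDiff_pd₁ hc).continuous
  have c11 := (contDiff_pd₁ (contDiff_pd₁ hc)).continuous
  have c22 := (contDiff_pd₂ (contDiff_pd₂ hc)).continuous
  have d2 := (contDiff_pd₂ hd).continuous
  have d12 := (contDiff_pd₂ (contDiff_pd₁ hd)).continuous
  refine integral_divergence_eq_zero _
    (fun θ ψ => (pd₁ c θ ψ * sin θ + 2 * c θ ψ * cos θ) * (a + b * cos θ)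
      + b * (c θ ψ * sin θ ^ 2))
    (fun θ ψ => (pd₁ (pd₁ c) θ ψ * sin θ + 3 * pd₁ c θ ψ * cos θ - 2 * c θ ψ * sin θ)
      * (a + b * cos θ))
    (fun θ ψ => (2 * pd₁ d θ ψ + 2 * d θ ψ * (cos θ / sin θ) - pd₂ c θ ψ * (sin θ)⁻¹)
      * (a + b * cos θ))
    (fun θ ψ => (2 * pd₂ (pd₁ d) θ ψ + 2 * pd₂ d θ ψ * (cos θ / sin θ)
      - pd₂ (pd₂ c) θ ψ * (sin θ)⁻¹) * (a + b * cos θ))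
    ?_ ?_ ?_ ?_ ?_ ?_ ?_
  · fun_prop
  · intro θ ψ
    have h := ((((hasDerivAt_pd₁ (contDiff_pd₁ hc) θ ψ).mul (hasDerivAt_sin θ)).add
      (((hasDerivAt_pd₁ hc θ ψ).const_mul 2).mul (hasDerivAt_cos θ))).mul
      (((hasDerivAt_cos θ).const_mul b).const_add a)).add
      (((hasDerivAt_pd₁ hc θ ψ).mul ((hasDerivAt_sin θ).pow 2)).const_mul b)
    refine h.congr_deriv ?_
    simp only [Pi.pow_apply, Pi.mul_apply, Pi.add_apply]
    push_cast
    ring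
  · intro θ
    have e1 : Continuous (pd₂ d θ) := d2.comp (Continuous.prodMk_right θ)
    have e2 : Continuous (pd₂ (pd₂ c) θ) := c22.comp (Continuous.prodMk_right θ)
    have e3 : Continuous (pd₂ (pd₁ d) θ) := d12.comp (Continuous.prodMk_right θ)
    fun_prop
  · intro θ _ ψ
    exact (((((hasDerivAt_pd₂ (contDiff_pd₁ hd) θ ψ).const_mul 2).add
      (((hasDerivAt_pd₂ hd θ ψ).const_mul 2).mul_const (cos θ / sin θ))).sub
      ((hasDerivAt_pd₂ (contDiff_pd₂ hc) θ ψ).mul_const (sin θ)⁻¹)).mul_const (a + b * cos θ))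
  · intro θ
    obtain ⟨-, -, a2, -⟩ := hAc θ
    obtain ⟨b0, b1, -⟩ := hAd θ
    simp only [← a2, ← b0, ← b1]
  · have e0 : Continuous (c 0) := c0.comp (Continuous.prodMk_right 0)
    have eπ : Continuous (c π) := c0.comp (Continuous.prodMk_right π)
    have hfun : ∀ ψ, (pd₁ c π ψ * sin π + 2 * c π ψ * cos π) * (a + b * cos π)
        + b * (c π ψ * sin π ^ 2) - ((pd₁ c 0 ψ * sin 0 + 2 * c 0 ψ * cos 0) * (a + b * cos 0)
        + b * (c 0 ψ * sin 0 ^ 2)) = (-2 * (a - b)) * c π ψ - (2 * (a + b)) * c 0 ψ := by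
      intro ψ
      simp only [sin_pi, cos_pi, sin_zero, cos_zero]
      ring
    simp only [hfun]
    rw [intervalIntegral.integral_sub ((eπ.const_mul _).intervalIntegrable _ _)
      ((e0.const_mul _).intervalIntegrable _ _), intervalIntegral.integral_const_mul,
      intervalIntegral.integral_const_mul, hB0, hBπ]
    simp
  · intro θ hs ψ
    have e := divergence_term_eq c d hc hd θ ψ hs
    rw [mul_right_comm, e]
    ring

/-- The divergence term `l_{,2} + l cot θ + l̄_{,3} csc θ` integrates to zero
against each of `n⁰, n¹, n², n³` over the unit sphere. -/
theorem divergence_term_integrates_to_zero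
    (c d : ℝ → ℝ → ℝ)
    (hc : ContDiff ℝ (⊤ : ℕ∞) (fun p : ℝ × ℝ => c p.1 p.2))
    (hd : ContDiff ℝ (⊤ : ℕ∞) (fun p : ℝ × ℝ => d p.1 p.2))
    (hAc : CondA c) (hAd : CondA d)
    (hB0 : (∫ ψ in (0:ℝ)..(2 * π), c 0 ψ) = 0)
    (hBπ : (∫ ψ in (0:ℝ)..(2 * π), c π ψ) = 0) :
    ∀ ν : Fin 4,
      (∫ θ in (0:ℝ)..π, ∫ ψ in (0:ℝ)..(2 * π),
        (pd₁ (lfun c d) θ ψ + lfun c d θ ψ * (cos θ / sin θ)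
          + pd₂ (lbar c d) θ ψ * (sin θ)⁻¹) * nvec ν θ ψ * sin θ) = 0 := by
  intro ν
  fin_cases ν
  · simpa [nvec] using integral_axial_eq_zero c d hc hd hAc hAd hB0 hBπ 1 0
  · exact integral_dipole_eq_zero c d hc hd hAc cos (fun ψ => -sin ψ) hasDerivAt_cos
      (fun ψ => (hasDerivAt_sin ψ).neg) (by simp) (by simp)
  · exact integral_dipole_eq_zero c d hc hd hAc sin cos hasDerivAt_sin hasDerivAt_cos
      (by simp) (by simp)
  · simpa [nvec] using integral_axial_eq_zero c d hc hd hAc hAd hB0 hBπ 0 1
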